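/- Let (C, d) be a filtered complex over the universal Novikov field Λ with filtration 𝒜, let D : (C, d) → (C, d) be a filtered chain map, and for σ > 0 let C̄_σ = Cone(T^σ · D) be the shifted mapping cone, with underlying module C ⊕ C, filtration max{𝒜, 𝒜}, and differential d_Cone(c, c') = (-d(c), T^σ D(c) + d(c')). Then for all σ sufficiently large (σ ≫ β(C,d), the maximal finite bar-length of (C,d)), the bar-length spectrum of C̄_σ splits into a low part, which equals the doubled bar-length spectrum β₁(C,d) ≤ β₁(C,d) ≤ ... ≤ β_K(C,d) ≤ β_K(C,d), and a high part, which equals σ + β_k(Cone(H(C,d), [D])) where [D] is the induced map on homology with the induced filtration H(𝒜). -/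

import Mathlib

/-- A family `e` is *orthogonal* for a filtration function `𝒜` and valuation `ν`. -/
def IsOrthFamily {Λ V ι : Type*} [Field Λ] [AddCommGroup V] [Module Λ V] [Fintype ι]
    (ν : Λ → EReal) (𝒜 : V → EReal) (e : ι → V) : Prop :=
  ∀ lam : ι → Λ,
    𝒜 (∑ i, lam i • e i) = Finset.univ.sup fun i => 𝒜 (e i) - ν (lam i)

/-- The multiset `S` is the finite bar-length spectrum of the filtered complex
`(V, d, 𝒜)`, via an orthogonal Usher–Zhang normal-form basis. -/
def IsBarSpectrum {Λ V : Type*} [Field Λ] [AddCommGroup V] [Module Λ V]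
    (ν : Λ → EReal) (𝒜 : V → EReal) (d : V →ₗ[Λ] V) (S : Multiset ℝ) : Prop :=
  ∃ (B K : ℕ) (e : Fin B ⊕ Fin K ⊕ Fin K → V) (β : Fin K → ℝ),
    LinearIndependent Λ e ∧
    Submodule.span Λ (Set.range e) = ⊤ ∧
    IsOrthFamily ν 𝒜 e ∧
    (∀ i : Fin B, d (e (Sum.inl i)) = 0) ∧
    (∀ j : Fin K, d (e (Sum.inr (Sum.inl j))) = e (Sum.inr (Sum.inr j))) ∧
    (∀ j : Fin K,
      𝒜 (e (Sum.inr (Sum.inl j))) - 𝒜 (e (Sum.inr (Sum.inr j))) = (β j : EReal)) ∧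
    S = Finset.univ.val.map β

/-- The homology of a differential `d : C → C`. -/
abbrev Hgy {Λ C : Type*} [Field Λ] [AddCommGroup C] [Module Λ C] (d : C →ₗ[Λ] C) :=
  LinearMap.ker d ⧸
    (Submodule.comap (LinearMap.ker d).subtype (LinearMap.range d))

/-- The induced filtration on homology: infimum of `𝒜` over representatives. -/
noncomputable def inducedFiltration {Λ C : Type*} [Field Λ] [AddCommGroup C] [Module Λ C]
    (d : C →ₗ[Λ] C) (𝒜 : C → EReal) : Hgy d → EReal :=
  fun h => sInf {r : EReal | ∃ x : LinearMap.ker d,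
    Submodule.Quotient.mk x = h ∧ 𝒜 (x : C) = r}

/-- The map induced on homology by a chain map `D`. -/
def inducedMap {Λ C : Type*} [Field Λ] [AddCommGroup C] [Module Λ C]
    (d D : C →ₗ[Λ] C) (hchain : d ∘ₗ D = D ∘ₗ d) : Hgy d →ₗ[Λ] Hgy d :=
  Submodule.mapQ _ _
    (D.restrict (p := LinearMap.ker d) (q := LinearMap.ker d) (fun x hx => by
      have h := LinearMap.congr_fun hchain x
      simp only [LinearMap.comp_apply] at h
      simp only [LinearMap.mem_ker] at hx ⊢
      rw [h, hx, map_zero]))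
    (by
      intro x hx
      simp only [Submodule.mem_comap, LinearMap.mem_range, Submodule.coe_subtype] at hx ⊢
      obtain ⟨y, hy⟩ := hx
      refine ⟨D y, ?_⟩
      have h := LinearMap.congr_fun hchain y
      simp only [LinearMap.comp_apply] at h
      rw [h, hy]
      rfl)

/-- The `σ`-shifted cone differential on `C × C`:
`(c, c') ↦ (-d c, t • D c + d c')`, where `t = T^σ`. -/
def coneDiff {Λ C : Type*} [Field Λ] [AddCommGroup C] [Module Λ C]
    (d D : C →ₗ[Λ] C) (t : Λ) : (C × C) →ₗ[Λ] (C × C) :=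
  LinearMap.prod ((-d) ∘ₗ LinearMap.fst Λ C C)
    ((t • D) ∘ₗ LinearMap.fst Λ C C + d ∘ₗ LinearMap.snd Λ C C)

/-- The cone filtration `max{𝒜, 𝒜}` on a product. -/
noncomputable def coneFilt {C C' : Type*} (𝒜 : C → EReal) (𝒜' : C' → EReal) : C × C' → EReal :=
  fun p => max (𝒜 p.1) (𝒜' p.2)

/-!
A normal-form basis of `(C, d)` splits the complex orthogonally into its homology, spanned by the
cycles `ξ i`, and an acyclic complex spanned by the pairs `ζ j ↦ η j`. Let `p` be the projection to
the former and `u : η j ↦ ζ j` the contracting homotopy, so that `1 = p + d u + u d`. Then `D` is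
chain homotopic to `p D p` via `u D p + D u`, a homotopy that raises the filtration by at most the
largest bar-length. Once `σ` reaches that bar-length, multiplying by `T^σ` makes the homotopy
filtered, so the shear it defines is an isometric isomorphism from the cone of `T^σ p D p` to the
cone of `T^σ D`. The former is the orthogonal sum of the cone of `T^σ [D]` on homology and two
copies of the acyclic part, and its bars can be read off.

The bar-length spectrum does not depend on the normal form: if `w ≠ 0` lies in the span of those
`η j` of one basis with bar-length at least `a`, every primitive of `w` lies at least `a` above `w`,
while the `η k` of another basis with bar-length below `a` have primitives closer than that. So the
two spans meet trivially, and a dimension count inside `range d` compares the numbers of long bars.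
-/

/-- A non-Archimedean valuation on a field with values in `ℝ ∪ {⊤}`, such as the valuation of the
universal Novikov field. It is written with values in `EReal`, so `⊥` has to be excluded. -/
structure IsNovikovValuation {Λ : Type*} [Field Λ] (ν : Λ → EReal) : Prop where
  ne_bot (x : Λ) : ν x ≠ ⊥
  eq_top_iff (x : Λ) : ν x = ⊤ ↔ x = 0
  map_mul (x y : Λ) : ν (x * y) = ν x + ν y
  min_le_map_add (x y : Λ) : min (ν x) (ν y) ≤ ν (x + y)

/-- A filtration function on a vector space over a valued field, i.e. the logarithm of a
non-Archimedean norm: scaling by `c` lowers the filtration level by `ν c`, and `⊥` is the level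
of `0`. -/
structure IsNovikovFiltration {Λ V : Type*} [Field Λ] [AddCommGroup V] [Module Λ V]
    (ν : Λ → EReal) (𝒜 : V → EReal) : Prop where
  ne_top (x : V) : 𝒜 x ≠ ⊤
  eq_bot_iff (x : V) : 𝒜 x = ⊥ ↔ x = 0
  map_smul (c : Λ) (x : V) : 𝒜 (c • x) = 𝒜 x - ν c
  map_add_le (x y : V) : 𝒜 (x + y) ≤ max (𝒜 x) (𝒜 y)

section

variable {Λ V W : Type*} [Field Λ] [AddCommGroup V] [Module Λ V] [AddCommGroup W] [Module Λ W]
  {ν : Λ → EReal} {𝒜 : V → EReal} {ℬ : W → EReal}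

namespace IsNovikovValuation

lemma map_zero (hν : IsNovikovValuation ν) : ν 0 = ⊤ :=
  (hν.eq_top_iff 0).2 rfl

lemma exists_coe_eq (hν : IsNovikovValuation ν) {c : Λ} (hc : c ≠ 0) : ∃ r : ℝ, ν c = r :=
  ⟨(ν c).toReal, (EReal.coe_toReal (mt (hν.eq_top_iff c).1 hc) (hν.ne_bot c)).symm⟩

lemma map_neg_one (hν : IsNovikovValuation ν) : ν (-1) = ((0 : ℝ) : EReal) := by
  obtain ⟨r, hr⟩ := hν.exists_coe_eq (one_ne_zero (α := Λ))
  obtain ⟨s, hs⟩ := hν.exists_coe_eq (neg_ne_zero.2 (one_ne_zero (α := Λ)))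
  have one_mul_one := hν.map_mul 1 1
  have neg_one_mul_neg_one := hν.map_mul (-1) (-1)
  rw [mul_one, hr] at one_mul_one
  rw [neg_mul_neg, mul_one, hr, hs] at neg_one_mul_neg_one
  norm_cast at one_mul_one neg_one_mul_neg_one
  rw [hs, EReal.coe_eq_coe_iff]
  linarith

end IsNovikovValuation

namespace IsNovikovFiltration

lemma map_zero (h𝒜 : IsNovikovFiltration ν 𝒜) : 𝒜 0 = ⊥ :=
  (h𝒜.eq_bot_iff 0).2 rfl

lemma map_neg (h𝒜 : IsNovikovFiltration ν 𝒜) (hν : IsNovikovValuation ν) (x : V) :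
    𝒜 (-x) = 𝒜 x := by
  rw [← neg_one_smul Λ x, h𝒜.map_smul, hν.map_neg_one, EReal.coe_zero, sub_zero]

lemma map_add_le_of_le (h𝒜 : IsNovikovFiltration ν 𝒜) {x y : V} {a : EReal} (hx : 𝒜 x ≤ a)
    (hy : 𝒜 y ≤ a) : 𝒜 (x + y) ≤ a :=
  (h𝒜.map_add_le x y).trans (max_le hx hy)

lemma map_sum_le_of_le {ι : Type*} (h𝒜 : IsNovikovFiltration ν 𝒜) (s : Finset ι)
    (f : ι → V) {a : EReal} (hf : ∀ i ∈ s, 𝒜 (f i) ≤ a) : 𝒜 (∑ i ∈ s, f i) ≤ a :=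
  Finset.sum_induction f (𝒜 · ≤ a) (fun _ _ => h𝒜.map_add_le_of_le) (h𝒜.map_zero.trans_le bot_le)
    hf

end IsNovikovFiltration

namespace IsOrthFamily

variable {ι ι' : Type*} [Fintype ι] [Fintype ι'] {e : ι → V} {e' : ι' → W}

lemma comp_injective (he : IsOrthFamily ν 𝒜 e) (hν : IsNovikovValuation ν) {f : ι' → ι}
    (hf : Function.Injective f) : IsOrthFamily ν 𝒜 (e ∘ f) := by
  intro c
  let c' : ι → Λ := Function.extend f c 0
  have c'_apply (i : ι') : c' (f i) = c i := hf.extend_apply c 0 i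
  have c'_eq_zero (i : ι) (hi : i ∉ Set.range f) : c' i = 0 := Function.extend_apply' c _ i hi
  have sum_eq : ∑ i, c i • (e ∘ f) i = ∑ i, c' i • e i :=
    Fintype.sum_of_injective f hf _ _ (fun i hi => by rw [c'_eq_zero i hi, zero_smul])
      (fun i => by rw [c'_apply, Function.comp_apply])
  rw [sum_eq, he]
  refine le_antisymm (Finset.sup_le fun i _ => ?_) (Finset.sup_le fun i _ => ?_)
  · by_cases hi : i ∈ Set.range f
    · obtain ⟨j, rfl⟩ := hi
      rw [c'_apply]
      exact Finset.le_sup (f := fun j => 𝒜 ((e ∘ f) j) - ν (c j)) (Finset.mem_univ j)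
    · rw [c'_eq_zero i hi, hν.map_zero, sub_eq_add_neg, EReal.neg_top, EReal.add_bot]
      exact bot_le
  · rw [← c'_apply i]
    exact Finset.le_sup (f := fun j => 𝒜 (e j) - ν (c' j)) (Finset.mem_univ (f i))

lemma map_zero (he : IsOrthFamily ν 𝒜 e) (hν : IsNovikovValuation ν) : 𝒜 0 = ⊥ := by
  simpa using he.comp_injective hν (Function.injective_of_subsingleton (Empty.elim : _ → ι)) 0

lemma map_smul (he : IsOrthFamily ν 𝒜 e) (hν : IsNovikovValuation ν) (c : Λ) (i : ι) :
    𝒜 (c • e i) = 𝒜 (e i) - ν c := by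
  simpa using
    he.comp_injective hν (Function.injective_of_subsingleton fun _ : Unit => i) fun _ => c

lemma smul_family (he : IsOrthFamily ν 𝒜 e) (hν : IsNovikovValuation ν) (a : ι → Λ) :
    IsOrthFamily ν 𝒜 (fun i => a i • e i) := by
  intro c
  simp_rw [smul_smul]
  rw [he fun i => c i * a i]
  refine Finset.sup_congr rfl fun i _ => ?_
  rw [he.map_smul hν, hν.map_mul, sub_eq_add_neg,
    EReal.neg_add (.inl (hν.ne_bot _)) (.inr (hν.ne_bot _)), sub_eq_add_neg, sub_eq_add_neg,
    sub_eq_add_neg, add_right_comm, add_assoc]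

lemma map_isometry (he : IsOrthFamily ν 𝒜 e) (φ : V →ₗ[Λ] W)
    (hφ : ∀ x, ℬ (φ x) = 𝒜 x) : IsOrthFamily ν ℬ (fun i => φ (e i)) := by
  intro c
  have sum_eq : ∑ i, c i • φ (e i) = φ (∑ i, c i • e i) := by simp
  rw [sum_eq, hφ, he]
  simp_rw [hφ]

lemma prod (he : IsOrthFamily ν 𝒜 e) (he' : IsOrthFamily ν ℬ e') (hν : IsNovikovValuation ν) :
    IsOrthFamily ν (coneFilt 𝒜 ℬ)
      (Sum.elim (LinearMap.inl Λ V W ∘ e) (LinearMap.inr Λ V W ∘ e')) := by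
  intro c
  have sum_eq : ∑ i, c i • Sum.elim (LinearMap.inl Λ V W ∘ e) (LinearMap.inr Λ V W ∘ e') i =
      (∑ i, c (.inl i) • e i, ∑ i, c (.inr i) • e' i) := by
    simp [Fintype.sum_sum_type, Prod.ext_iff, Prod.fst_sum, Prod.snd_sum]
  rw [sum_eq, coneFilt, he, he', ← Finset.univ_disjSum_univ, Finset.sup_disjSum]
  simp [coneFilt, he.map_zero hν, he'.map_zero hν]

section Basis

variable {b : Module.Basis ι Λ V}

lemma apply_eq_sup_repr (hb : IsOrthFamily ν 𝒜 b) (x : V) :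
    𝒜 x = Finset.univ.sup fun i => 𝒜 (b i) - ν (b.repr x i) := by
  rw [← hb, b.sum_repr]

lemma apply_sub_repr_le (hb : IsOrthFamily ν 𝒜 b) (x : V) (i : ι) :
    𝒜 (b i) - ν (b.repr x i) ≤ 𝒜 x := by
  rw [hb.apply_eq_sup_repr x]
  exact Finset.le_sup (f := fun i => 𝒜 (b i) - ν (b.repr x i)) (Finset.mem_univ i)

lemma exists_repr_ne_zero_and_apply_eq (hb : IsOrthFamily ν 𝒜 b) (hν : IsNovikovValuation ν)
    {x : V} (hx : x ≠ 0) : ∃ i, b.repr x i ≠ 0 ∧ 𝒜 x = 𝒜 (b i) - ν (b.repr x i) := by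
  obtain ⟨j, hj⟩ : ∃ j, b.repr x j ≠ 0 := by
    by_contra! h
    exact hx (b.repr.map_eq_zero_iff.1 (Finsupp.ext h))
  by_cases hbot : 𝒜 x = ⊥
  · exact ⟨j, hj, by rw [hbot, eq_comm, ← le_bot_iff, ← hbot]; exact hb.apply_sub_repr_le x j⟩
  · obtain ⟨i, -, hi⟩ := Finset.exists_mem_eq_sup Finset.univ ⟨j, Finset.mem_univ j⟩
      fun i => 𝒜 (b i) - ν (b.repr x i)
    rw [← hb.apply_eq_sup_repr x] at hi
    refine ⟨i, fun h0 => hbot ?_, hi⟩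
    rw [hi, h0, hν.map_zero, sub_eq_add_neg, EReal.neg_top, EReal.add_bot]

lemma map_le_add_of_forall_basis (hb : IsOrthFamily ν 𝒜 b) (hℬ : IsNovikovFiltration ν ℬ)
    (f : V →ₗ[Λ] W) {r : EReal} (hf : ∀ i, ℬ (f (b i)) ≤ 𝒜 (b i) + r) (x : V) :
    ℬ (f x) ≤ 𝒜 x + r := by
  have map_eq : f x = ∑ i, b.repr x i • f (b i) := by
    conv_lhs => rw [← b.sum_repr x]
    simp only [map_sum, LinearMap.map_smul]
  rw [map_eq]
  refine hℬ.map_sum_le_of_le _ _ fun i _ => ?_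
  rw [hℬ.map_smul]
  calc ℬ (f (b i)) - ν (b.repr x i)
      ≤ 𝒜 (b i) + r - ν (b.repr x i) := EReal.sub_le_sub (hf i) le_rfl
    _ = 𝒜 (b i) - ν (b.repr x i) + r := by rw [sub_eq_add_neg, sub_eq_add_neg, add_right_comm]
    _ ≤ 𝒜 x + r := add_le_add_left (hb.apply_sub_repr_le x i) r

end Basis

end IsOrthFamily

/-- An orthogonal Usher–Zhang normal form of a filtered differential `d`, over arbitrary finite
index types. The basis consists of cycles `ξ i = basis (inl i)`, of `ζ j = basis (inr (inl j))`
and of `η j = basis (inr (inr j))` with `d (ζ j) = η j`; the `j`-th bar starts at the level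
`birth j` of `η j` and ends at the level of `ζ j`. -/
structure NormalForm (ι κ : Type*) [Fintype ι] [Fintype κ] (ν : Λ → EReal) (𝒜 : V → EReal)
    (d : V →ₗ[Λ] V) where
  basis : Module.Basis (ι ⊕ κ ⊕ κ) Λ V
  birth : κ → ℝ
  barLength : κ → ℝ
  orth : IsOrthFamily ν 𝒜 basis
  map_ξ (i : ι) : d (basis (.inl i)) = 0
  map_ζ (j : κ) : d (basis (.inr (.inl j))) = basis (.inr (.inr j))
  map_η (j : κ) : d (basis (.inr (.inr j))) = 0
  apply_η (j : κ) : 𝒜 (basis (.inr (.inr j))) = birth j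
  apply_ζ (j : κ) : 𝒜 (basis (.inr (.inl j))) = (birth j + barLength j : ℝ)

lemma exists_coe_of_sub_eq_coe {x y : EReal} {b : ℝ} (h : x - y = b) :
    ∃ r : ℝ, y = r ∧ x = (r + b : ℝ) := by
  induction x <;> induction y <;> simp_all [sub_eq_add_neg]
  norm_cast at h ⊢
  linarith

variable {ι κ ι' κ' : Type*} [Fintype ι] [Fintype κ] [Fintype ι'] [Fintype κ']
  {d D : V →ₗ[Λ] V} {d' : W →ₗ[Λ] W}

namespace NormalForm

/-- The multiset of finite bar-lengths of a normal form. -/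
def barSpectrum (N : NormalForm ι κ ν 𝒜 d) : Multiset ℝ :=
  Finset.univ.val.map N.barLength

end NormalForm

lemma IsBarSpectrum.exists_normalForm {S : Multiset ℝ} (h : IsBarSpectrum ν 𝒜 d S)
    (hd : d ∘ₗ d = 0) :
    ∃ (B K : ℕ) (N : NormalForm (Fin B) (Fin K) ν 𝒜 d), N.barSpectrum = S := by
  obtain ⟨B, K, e, β, li, span, orth, map_ξ, map_ζ, bar, rfl⟩ := h
  choose r hη hζ using fun j => exists_coe_of_sub_eq_coe (bar j)
  let b := Module.Basis.mk li span.ge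
  have hb : ⇑b = e := Module.Basis.coe_mk li span.ge
  refine ⟨B, K, ⟨b, r, β, ?_, ?_, ?_, ?_, ?_, ?_⟩, rfl⟩ <;> rw [hb]
  · exact orth
  · exact map_ξ
  · exact map_ζ
  · exact fun j => by rw [← map_ζ]; exact LinearMap.congr_fun hd _
  · exact hη
  · exact hζ

namespace NormalForm

/-! ### Isometries, rescalings and direct sums -/

/-- Transport of a normal form along an isometric isomorphism of filtered complexes. -/
noncomputable def map (N : NormalForm ι κ ν 𝒜 d) (φ : V ≃ₗ[Λ] W) (hφ : ∀ x, ℬ (φ x) = 𝒜 x)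
    (hd : ∀ x, d' (φ x) = φ (d x)) : NormalForm ι κ ν ℬ d' where
  basis := N.basis.map φ
  birth := N.birth
  barLength := N.barLength
  orth := N.orth.map_isometry φ.toLinearMap hφ
  map_ξ i := by simp [hd, N.map_ξ]
  map_ζ j := by simp [hd, N.map_ζ]
  map_η j := by simp [hd, N.map_η]
  apply_η j := by simp [hφ, N.apply_η]
  apply_ζ j := by simp [hφ, N.apply_ζ]

@[simp]
lemma barSpectrum_map (N : NormalForm ι κ ν 𝒜 d) (φ : V ≃ₗ[Λ] W) (hφ : ∀ x, ℬ (φ x) = 𝒜 x)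
    (hd : ∀ x, d' (φ x) = φ (d x)) : (N.map φ hφ hd).barSpectrum = N.barSpectrum :=
  rfl

/-- The normal form of `t • d`, where `ν t = σ`: each `η j` is rescaled by `t`, which lengthens
all bars by `σ`. -/
noncomputable def smul (N : NormalForm ι κ ν 𝒜 d) (hν : IsNovikovValuation ν) {t : Λ} {σ : ℝ}
    (ht : ν t = σ) : NormalForm ι κ ν 𝒜 (t • d) :=
  have t_ne_zero : t ≠ 0 := by
    rintro rfl
    exact EReal.coe_ne_top σ (ht.symm.trans hν.map_zero)
  have scaling_isUnit (i : ι ⊕ κ ⊕ κ) : IsUnit (Sum.elim 1 (Sum.elim 1 fun _ => t) i) := by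
    rcases i with _ | _ | _ <;> simp [t_ne_zero]
  { basis := N.basis.isUnitSMul scaling_isUnit
    birth := fun j => N.birth j - σ
    barLength := fun j => σ + N.barLength j
    orth := by
      have h := N.orth.smul_family hν (Sum.elim 1 (Sum.elim 1 fun _ => t))
      rwa [← funext (Module.Basis.isUnitSMul_apply scaling_isUnit)] at h
    map_ξ := fun i => by simp [Module.Basis.isUnitSMul_apply, N.map_ξ]
    map_ζ := fun j => by simp [Module.Basis.isUnitSMul_apply, N.map_ζ]
    map_η := fun j => by simp [Module.Basis.isUnitSMul_apply, N.map_η]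
    apply_η := fun j => by
      simp [Module.Basis.isUnitSMul_apply, N.orth.map_smul hν, N.apply_η, ht]
    apply_ζ := fun j => by
      rw [← add_assoc, sub_add_cancel]
      simp [Module.Basis.isUnitSMul_apply, N.apply_ζ] }

@[simp]
lemma barSpectrum_smul (N : NormalForm ι κ ν 𝒜 d) (hν : IsNovikovValuation ν) {t : Λ} {σ : ℝ}
    (ht : ν t = σ) : (N.smul hν ht).barSpectrum = N.barSpectrum.map (σ + ·) := by
  rw [barSpectrum, barSpectrum, Multiset.map_map]
  rfl

/-- The normal form of a direct sum of filtered complexes. -/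
noncomputable def prod (N : NormalForm ι κ ν 𝒜 d) (M : NormalForm ι' κ' ν ℬ d')
    (hν : IsNovikovValuation ν) :
    NormalForm (ι ⊕ ι') (κ ⊕ κ') ν (coneFilt 𝒜 ℬ) (d.prodMap d') :=
  let interleave : (ι ⊕ κ ⊕ κ) ⊕ (ι' ⊕ κ' ⊕ κ') ≃ (ι ⊕ ι') ⊕ (κ ⊕ κ') ⊕ (κ ⊕ κ') :=
    (Equiv.sumSumSumComm _ _ _ _).trans ((Equiv.refl _).sumCongr (Equiv.sumSumSumComm _ _ _ _))
  { basis := (N.basis.prod M.basis).reindex interleave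
    birth := Sum.elim N.birth M.birth
    barLength := Sum.elim N.barLength M.barLength
    orth := by
      have h := (N.orth.prod M.orth hν).comp_injective hν interleave.symm.injective
      rwa [← funext (Module.Basis.prod_apply N.basis M.basis),
        ← Module.Basis.coe_reindex] at h
    map_ξ := by rintro (i | i) <;> simp [interleave, N.map_ξ, M.map_ξ]
    map_ζ := by rintro (j | j) <;> simp [interleave, N.map_ζ, M.map_ζ]
    map_η := by rintro (j | j) <;> simp [interleave, N.map_η, M.map_η]
    apply_η := by
      rintro (j | j) <;>
        simp [interleave, coneFilt, N.apply_η, M.apply_η, N.orth.map_zero hν, M.orth.map_zero hν]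
    apply_ζ := by
      rintro (j | j) <;>
        simp [interleave, coneFilt, N.apply_ζ, M.apply_ζ, N.orth.map_zero hν, M.orth.map_zero hν] }

@[simp]
lemma barSpectrum_prod (N : NormalForm ι κ ν 𝒜 d) (M : NormalForm ι' κ' ν ℬ d')
    (hν : IsNovikovValuation ν) : (N.prod M hν).barSpectrum = N.barSpectrum + M.barSpectrum := by
  simp only [barSpectrum, prod, ← Finset.univ_disjSum_univ, Finset.val_disjSum,
    Multiset.disjSum, Multiset.map_add, Multiset.map_map, Function.comp_def, Sum.elim_inl,
    Sum.elim_inr]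

end NormalForm

namespace NormalForm

variable (N : NormalForm ι κ ν 𝒜 d)

/-! ### The contraction onto harmonic cycles -/

/-- The projection onto the span of the cycles `ξ i` along the vectors `ζ j` and `η j`. -/
noncomputable def harmonicProj : V →ₗ[Λ] V :=
  N.basis.constr Λ (Sum.elim (fun i => N.basis (.inl i)) 0)

/-- The contracting homotopy: it sends `η j` to `ζ j` and kills the other basis vectors. -/
noncomputable def homotopy : V →ₗ[Λ] V :=
  N.basis.constr Λ (Sum.elim 0 (Sum.elim 0 fun j => N.basis (.inr (.inl j))))

@[simp]
lemma harmonicProj_ξ (i : ι) : N.harmonicProj (N.basis (.inl i)) = N.basis (.inl i) :=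
  N.basis.constr_basis Λ _ _

@[simp]
lemma harmonicProj_inr (j : κ ⊕ κ) : N.harmonicProj (N.basis (.inr j)) = 0 :=
  N.basis.constr_basis Λ _ _

@[simp]
lemma homotopy_ξ (i : ι) : N.homotopy (N.basis (.inl i)) = 0 :=
  N.basis.constr_basis Λ _ _

@[simp]
lemma homotopy_ζ (j : κ) : N.homotopy (N.basis (.inr (.inl j))) = 0 :=
  N.basis.constr_basis Λ _ _

@[simp]
lemma homotopy_η (j : κ) : N.homotopy (N.basis (.inr (.inr j))) = N.basis (.inr (.inl j)) :=
  N.basis.constr_basis Λ _ _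

lemma harmonicProj_add_map_homotopy_add_homotopy_map (x : V) :
    N.harmonicProj x + d (N.homotopy x) + N.homotopy (d x) = x := by
  have h : N.harmonicProj + d ∘ₗ N.homotopy + N.homotopy ∘ₗ d = LinearMap.id :=
    N.basis.ext <| by rintro (i | j | j) <;> simp [N.map_ξ, N.map_ζ, N.map_η]
  exact LinearMap.congr_fun h x

lemma map_harmonicProj (x : V) : d (N.harmonicProj x) = 0 := by
  have h : d ∘ₗ N.harmonicProj = 0 := N.basis.ext <| by rintro (i | j) <;> simp [N.map_ξ]
  exact LinearMap.congr_fun h x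

lemma harmonicProj_map (x : V) : N.harmonicProj (d x) = 0 := by
  have h : N.harmonicProj ∘ₗ d = 0 :=
    N.basis.ext <| by rintro (i | j | j) <;> simp [N.map_ξ, N.map_ζ, N.map_η]
  exact LinearMap.congr_fun h x

lemma harmonicProj_harmonicProj (x : V) :
    N.harmonicProj (N.harmonicProj x) = N.harmonicProj x := by
  have h : N.harmonicProj ∘ₗ N.harmonicProj = N.harmonicProj :=
    N.basis.ext <| by rintro (i | j) <;> simp
  exact LinearMap.congr_fun h x

lemma apply_harmonicProj_le (h𝒜 : IsNovikovFiltration ν 𝒜) (x : V) :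
    𝒜 (N.harmonicProj x) ≤ 𝒜 x := by
  rw [← add_zero (𝒜 x)]
  refine N.orth.map_le_add_of_forall_basis h𝒜 _ ?_ x
  rintro (i | j) <;> simp [h𝒜.map_zero]

lemma apply_homotopy_le (h𝒜 : IsNovikovFiltration ν 𝒜) {σ : ℝ} (hσ : ∀ j, N.barLength j ≤ σ)
    (x : V) : 𝒜 (N.homotopy x) ≤ 𝒜 x + σ := by
  refine N.orth.map_le_add_of_forall_basis h𝒜 _ ?_ x
  rintro (i | j | j)
  · simp [h𝒜.map_zero]
  · simp [h𝒜.map_zero]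
  · rw [homotopy_η, N.apply_ζ, N.apply_η]
    exact_mod_cast add_le_add_right (hσ j) (N.birth j)

/-! ### Uniqueness of the bar-length spectrum -/

/-- The boundaries spanned by the vectors `η j` with `j ∈ s`. -/
def boundarySpan (s : Set κ) : Submodule Λ V :=
  Submodule.span Λ ((fun j => N.basis (.inr (.inr j))) '' s)

lemma finrank_boundarySpan (s : Set κ) : Module.finrank Λ (N.boundarySpan s) = s.ncard := by
  classical
  have li : LinearIndependent Λ fun j : s => N.basis (.inr (.inr j.1)) :=
    N.basis.linearIndependent.comp (fun j : s => .inr (.inr j.1))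
      fun j k h => Subtype.ext (Sum.inr_injective (Sum.inr_injective h))
  rw [boundarySpan, Set.image_eq_range, finrank_span_eq_card li, Fintype.card_eq_nat_card,
    Nat.card_coe_set_eq]

lemma boundarySpan_univ : N.boundarySpan Set.univ = LinearMap.range d := by
  refine le_antisymm ?_ ?_
  · rw [boundarySpan, Submodule.span_le]
    rintro _ ⟨j, -, rfl⟩
    exact ⟨_, N.map_ζ j⟩
  · rw [LinearMap.range_eq_map, ← N.basis.span_eq, Submodule.map_span, Submodule.span_le]
    rintro _ ⟨_, ⟨i | j | j, rfl⟩, rfl⟩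
    · simp [N.map_ξ]
    · rw [N.map_ζ]
      exact Submodule.subset_span ⟨j, trivial, rfl⟩
    · simp [N.map_η]

lemma boundarySpan_le_range (s : Set κ) : N.boundarySpan s ≤ LinearMap.range d :=
  (Submodule.span_mono (Set.image_mono (Set.subset_univ s))).trans N.boundarySpan_univ.le

lemma exists_eq_η_of_mem_boundarySpan {s : Set κ} {w : V} (hw : w ∈ N.boundarySpan s)
    {i : ι ⊕ κ ⊕ κ} (hi : N.basis.repr w i ≠ 0) : ∃ j ∈ s, i = .inr (.inr j) := by
  have hw' : w ∈ Submodule.span Λ (N.basis '' ((fun j => .inr (.inr j)) '' s)) := by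
    rwa [Set.image_image]
  obtain ⟨j, hj, rfl⟩ := N.basis.mem_span_image.1 hw' (Finsupp.mem_support_iff.2 hi)
  exact ⟨j, hj, rfl⟩

lemma repr_map_η (x : V) (j : κ) :
    N.basis.repr (d x) (.inr (.inr j)) = N.basis.repr x (.inr (.inl j)) := by
  classical
  have h : N.basis.coord (.inr (.inr j)) ∘ₗ d = N.basis.coord (.inr (.inl j)) :=
    N.basis.ext <| by
      rintro (i | k | k) <;> simp [N.map_ξ, N.map_ζ, N.map_η, Finsupp.single_apply]
  exact LinearMap.congr_fun h x

lemma repr_homotopy (x : V) (i : ι ⊕ κ ⊕ κ) :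
    N.basis.repr (N.homotopy x) i =
      Sum.elim (fun _ => 0) (Sum.elim (fun j => N.basis.repr x (.inr (.inr j))) fun _ => 0) i := by
  classical
  have h : N.basis.coord i ∘ₗ N.homotopy =
      Sum.elim (fun _ => 0) (Sum.elim (fun j => N.basis.coord (.inr (.inr j))) fun _ => 0) i :=
    N.basis.ext <| by
      rcases i with i | j | j <;> rintro (k | k | k) <;> simp [Finsupp.single_apply]
  have hx := LinearMap.congr_fun h x
  rcases i with i | j | j <;> exact hx

lemma map_homotopy_of_mem_boundarySpan {s : Set κ} {w : V} (hw : w ∈ N.boundarySpan s) :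
    d (N.homotopy w) = w := by
  have h : N.boundarySpan s ≤ LinearMap.eqLocus (d ∘ₗ N.homotopy) LinearMap.id := by
    rw [boundarySpan, Submodule.span_le]
    rintro _ ⟨j, -, rfl⟩
    simp [N.map_ζ]
  exact h hw

lemma exists_apply_eq_of_mem_boundarySpan (hν : IsNovikovValuation ν) {s : Set κ} {w : V}
    (hw : w ∈ N.boundarySpan s) (hw0 : w ≠ 0) :
    ∃ j ∈ s, N.basis.repr w (.inr (.inr j)) ≠ 0 ∧
      𝒜 w = N.birth j - ν (N.basis.repr w (.inr (.inr j))) := by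
  obtain ⟨i, hi, hwi⟩ := N.orth.exists_repr_ne_zero_and_apply_eq hν hw0
  obtain ⟨j, hj, rfl⟩ := N.exists_eq_η_of_mem_boundarySpan hw hi
  exact ⟨j, hj, hi, by rw [hwi, N.apply_η]⟩

lemma exists_coe_eq_of_mem_boundarySpan (hν : IsNovikovValuation ν) {s : Set κ} {w : V}
    (hw : w ∈ N.boundarySpan s) (hw0 : w ≠ 0) : ∃ r : ℝ, 𝒜 w = r := by
  obtain ⟨j, -, hj, hwj⟩ := N.exists_apply_eq_of_mem_boundarySpan hν hw hw0
  obtain ⟨r, hr⟩ := hν.exists_coe_eq hj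
  exact ⟨N.birth j - r, by rw [hwj, hr, EReal.coe_sub]⟩

lemma apply_ζ_sub (j : κ) (c : EReal) :
    𝒜 (N.basis (.inr (.inl j))) - c = N.birth j - c + N.barLength j := by
  rw [N.apply_ζ, EReal.coe_add, sub_eq_add_neg, sub_eq_add_neg, add_right_comm]

lemma exists_add_barLength_le_apply_of_mem_boundarySpan (hν : IsNovikovValuation ν) {s : Set κ}
    {x : V} (hx : d x ∈ N.boundarySpan s) (hx0 : d x ≠ 0) :
    ∃ j ∈ s, 𝒜 (d x) + N.barLength j ≤ 𝒜 x := by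
  obtain ⟨j, hj, -, hxj⟩ := N.exists_apply_eq_of_mem_boundarySpan hν hx hx0
  refine ⟨j, hj, ?_⟩
  rw [hxj, repr_map_η, ← apply_ζ_sub]
  exact N.orth.apply_sub_repr_le x _

lemma exists_apply_homotopy_le_of_mem_boundarySpan (hν : IsNovikovValuation ν) {s : Set κ}
    {w : V} (hw : w ∈ N.boundarySpan s) (hw0 : w ≠ 0) :
    ∃ j ∈ s, 𝒜 (N.homotopy w) ≤ 𝒜 w + N.barLength j := by
  have homotopy_ne_zero : N.homotopy w ≠ 0 := fun h =>
    hw0 (by rw [← N.map_homotopy_of_mem_boundarySpan hw, h, map_zero])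
  obtain ⟨i, hi, hwi⟩ := N.orth.exists_repr_ne_zero_and_apply_eq hν homotopy_ne_zero
  rw [repr_homotopy] at hi hwi
  obtain i | j | j := i
  · exact absurd rfl hi
  · obtain ⟨k, hk, hjk⟩ := N.exists_eq_η_of_mem_boundarySpan hw hi
    obtain rfl : j = k := Sum.inr_injective (Sum.inr_injective hjk)
    refine ⟨j, hk, ?_⟩
    rw [hwi, apply_ζ_sub, ← N.apply_η]
    exact add_le_add_left (N.orth.apply_sub_repr_le w _) _
  · exact absurd rfl hi

variable (M : NormalForm ι' κ' ν 𝒜 d)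

lemma disjoint_boundarySpan (hν : IsNovikovValuation ν) {s : Set κ} {s' : Set κ'}
    (h : ∀ j ∈ s, ∀ k ∈ s', M.barLength k < N.barLength j) :
    Disjoint (N.boundarySpan s) (M.boundarySpan s') := by
  rw [Submodule.disjoint_def]
  intro w hw hw'
  by_contra hw0
  have map_homotopy := M.map_homotopy_of_mem_boundarySpan hw'
  obtain ⟨r, hr⟩ := N.exists_coe_eq_of_mem_boundarySpan hν hw hw0
  obtain ⟨j, hj, hj_le⟩ := N.exists_add_barLength_le_apply_of_mem_boundarySpan hν
    (x := M.homotopy w) (map_homotopy.symm ▸ hw) (map_homotopy.symm ▸ hw0)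
  obtain ⟨k, hk, hk_le⟩ := M.exists_apply_homotopy_le_of_mem_boundarySpan hν hw' hw0
  rw [map_homotopy] at hj_le
  have hjk := hj_le.trans hk_le
  rw [hr] at hjk
  norm_cast at hjk
  linarith [h j hj k hk]

lemma ncard_le_ncard (hν : IsNovikovValuation ν) {s : Set κ} {s' : Set κ'}
    (h : ∀ j ∈ s, ∀ k ∉ s', M.barLength k < N.barLength j) : s.ncard ≤ s'.ncard := by
  have := N.basis.finiteDimensional_of_finite
  have h_disjoint : N.boundarySpan s ⊓ M.boundarySpan s'ᶜ = ⊥ :=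
    (N.disjoint_boundarySpan M hν h).eq_bot
  have h_finrank := Submodule.finrank_sup_add_finrank_inf_eq (N.boundarySpan s)
    (M.boundarySpan s'ᶜ)
  have h_le : Module.finrank Λ ↥(N.boundarySpan s ⊔ M.boundarySpan s'ᶜ) ≤
      Module.finrank Λ (M.boundarySpan Set.univ) := by
    rw [boundarySpan_univ]
    exact Submodule.finrank_mono (sup_le (N.boundarySpan_le_range s) (M.boundarySpan_le_range _))
  rw [h_disjoint, finrank_bot, finrank_boundarySpan, finrank_boundarySpan] at h_finrank
  rw [finrank_boundarySpan, Set.ncard_univ, ← Set.ncard_add_ncard_compl s'] at h_le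
  omega

lemma countP_barSpectrum (p : ℝ → Prop) [DecidablePred p] :
    N.barSpectrum.countP p = {j | p (N.barLength j)}.ncard := by
  rw [barSpectrum, Multiset.countP_map, Set.ncard_eq_toFinset_card', Set.toFinset_ofPred]
  rfl

lemma countP_barSpectrum_eq (hν : IsNovikovValuation ν) {p : ℝ → Prop} [DecidablePred p]
    (hp : ∀ a b, p a → ¬ p b → b < a) : N.barSpectrum.countP p = M.barSpectrum.countP p := by
  rw [countP_barSpectrum, countP_barSpectrum]
  exact le_antisymm (N.ncard_le_ncard M hν fun _ hj _ hk => hp _ _ hj hk)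
    (M.ncard_le_ncard N hν fun _ hj _ hk => hp _ _ hj hk)

end NormalForm

lemma countP_le_eq_countP_lt_add_count {α : Type*} [LinearOrder α] (S : Multiset α) (a : α) :
    S.countP (a ≤ ·) = S.countP (a < ·) + S.count a := by
  induction S using Multiset.induction_on with
  | empty => simp
  | cons b S ih =>
    rw [Multiset.countP_cons, Multiset.countP_cons, Multiset.count_cons, ih]
    rcases lt_trichotomy a b with h | rfl | h
    · simp [h, h.le, h.ne, add_right_comm]
    · simp [add_assoc]
    · simp [h.not_ge, h.not_gt, h.ne']

theorem NormalForm.barSpectrum_unique (N : NormalForm ι κ ν 𝒜 d) (M : NormalForm ι' κ' ν 𝒜 d)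
    (hν : IsNovikovValuation ν) : N.barSpectrum = M.barSpectrum := by
  ext a
  have h_le := N.countP_barSpectrum_eq M hν (p := (a ≤ ·))
    fun _ _ hb hc => (not_le.1 hc).trans_le hb
  have h_lt := N.countP_barSpectrum_eq M hν (p := (a < ·))
    fun _ _ hb hc => (not_lt.1 hc).trans_lt hb
  rw [countP_le_eq_countP_lt_add_count, countP_le_eq_countP_lt_add_count, h_lt] at h_le
  exact Nat.add_left_cancel h_le

theorem IsBarSpectrum.unique {S S' : Multiset ℝ} (hν : IsNovikovValuation ν) (hd : d ∘ₗ d = 0)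
    (hS : IsBarSpectrum ν 𝒜 d S) (hS' : IsBarSpectrum ν 𝒜 d S') : S = S' := by
  obtain ⟨B, K, N, rfl⟩ := hS.exists_normalForm hd
  obtain ⟨B', K', N', rfl⟩ := hS'.exists_normalForm hd
  exact N.barSpectrum_unique N' hν

lemma exists_barLength_le (hν : IsNovikovValuation ν) (𝒜 : V → EReal) (hd : d ∘ₗ d = 0) :
    ∃ σ₀ : ℝ, ∀ S, IsBarSpectrum ν 𝒜 d S → ∀ b ∈ S, b ≤ σ₀ := by
  by_cases h : ∃ S, IsBarSpectrum ν 𝒜 d S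
  · obtain ⟨S, hS⟩ := h
    obtain ⟨σ₀, hσ₀⟩ := S.toFinset.bddAbove
    refine ⟨σ₀, fun S' hS' b hb => hσ₀ ?_⟩
    rwa [Finset.mem_coe, Multiset.mem_toFinset, hS.unique hν hd hS']
  · exact ⟨0, fun S hS => absurd ⟨S, hS⟩ h⟩

namespace NormalForm

variable (N : NormalForm ι κ ν 𝒜 d)

/-! ### The splitting into homology and an acyclic complex -/

/-- The span of the vectors `ζ j` and `η j`, a complement of the span of the cycles `ξ i`. -/
def acyclicPart : Submodule Λ V :=
  Submodule.span Λ (Set.range fun j => N.basis (.inr j))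

lemma basis_inr_mem_acyclicPart (j : κ ⊕ κ) : N.basis (.inr j) ∈ N.acyclicPart :=
  Submodule.subset_span ⟨j, rfl⟩

lemma map_mem_acyclicPart {z : V} (hz : z ∈ N.acyclicPart) : d z ∈ N.acyclicPart := by
  suffices h : N.acyclicPart ≤ N.acyclicPart.comap d from h hz
  refine Submodule.span_le.2 ?_
  rintro _ ⟨j | j, rfl⟩
  · simpa [N.map_ζ] using N.basis_inr_mem_acyclicPart (.inr j)
  · simp [N.map_η]

lemma map_homotopy_add_homotopy_map_mem_acyclicPart (x : V) :
    d (N.homotopy x) + N.homotopy (d x) ∈ N.acyclicPart := by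
  suffices h : ⊤ ≤ N.acyclicPart.comap (d ∘ₗ N.homotopy + N.homotopy ∘ₗ d) from h trivial
  rw [← N.basis.span_eq]
  refine Submodule.span_le.2 ?_
  rintro _ ⟨i | j | j, rfl⟩
  · simp [N.map_ξ]
  · simpa [N.map_ζ] using N.basis_inr_mem_acyclicPart (.inl j)
  · simpa [N.map_η, N.map_ζ] using N.basis_inr_mem_acyclicPart (.inr j)

lemma harmonicProj_of_mem_acyclicPart {z : V} (hz : z ∈ N.acyclicPart) :
    N.harmonicProj z = 0 := by
  suffices h : N.acyclicPart ≤ LinearMap.ker N.harmonicProj from h hz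
  refine Submodule.span_le.2 ?_
  rintro _ ⟨j, rfl⟩
  exact N.harmonicProj_inr j

/-- The restriction of `d` to the acyclic part. -/
def acyclicDiff : N.acyclicPart →ₗ[Λ] N.acyclicPart :=
  d.restrict fun _ => N.map_mem_acyclicPart

/-- The normal form of the acyclic part: all bars of `N` and no cycles `ξ i`. -/
noncomputable def acyclic (hν : IsNovikovValuation ν) :
    NormalForm Empty κ ν (fun z : N.acyclicPart => 𝒜 z) N.acyclicDiff :=
  let b : Module.Basis (κ ⊕ κ) Λ N.acyclicPart :=
    Module.Basis.span (N.basis.linearIndependent.comp Sum.inr Sum.inr_injective)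
  have b_apply (j : κ ⊕ κ) : (b j : V) = N.basis (.inr j) :=
    congrArg Subtype.val (Module.Basis.span_apply _ j)
  let e : κ ⊕ κ ≃ Empty ⊕ κ ⊕ κ := (Equiv.emptySum Empty (κ ⊕ κ)).symm
  { basis := b.reindex e
    birth := N.birth
    barLength := N.barLength
    orth := fun c => by
      have h := N.orth.comp_injective hν (Sum.inr_injective.comp e.symm.injective) c
      simpa [b_apply] using h
    map_ξ := nofun
    map_ζ := fun j => Subtype.ext <| by
      simp [e, acyclicDiff, b_apply, N.map_ζ]
    map_η := fun j => Subtype.ext <| by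
      simp [e, acyclicDiff, b_apply, N.map_η]
    apply_η := fun j => by simp [e, b_apply, N.apply_η]
    apply_ζ := fun j => by simp [e, b_apply, N.apply_ζ] }

@[simp]
lemma barSpectrum_acyclic (hν : IsNovikovValuation ν) :
    (N.acyclic hν).barSpectrum = N.barSpectrum :=
  rfl

/-- The embedding of homology as the span of the cycles `ξ i`, sending a class to its unique
representative there. -/
noncomputable def harmonicRep : Hgy d →ₗ[Λ] V :=
  Submodule.liftQ _ (N.harmonicProj ∘ₗ (LinearMap.ker d).subtype) <| by
    rintro x ⟨y, hy⟩
    rw [LinearMap.mem_ker, LinearMap.comp_apply, ← hy, harmonicProj_map]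

lemma harmonicRep_mk (x : LinearMap.ker d) :
    N.harmonicRep (Submodule.Quotient.mk x) = N.harmonicProj x :=
  rfl

lemma harmonicProj_harmonicRep (h : Hgy d) :
    N.harmonicProj (N.harmonicRep h) = N.harmonicRep h := by
  obtain ⟨x, rfl⟩ := Submodule.Quotient.mk_surjective _ h
  rw [harmonicRep_mk, harmonicProj_harmonicProj]

lemma map_harmonicRep (h : Hgy d) : d (N.harmonicRep h) = 0 := by
  rw [← harmonicProj_harmonicRep, map_harmonicProj]

lemma harmonicRep_injective : Function.Injective N.harmonicRep := by
  rw [injective_iff_map_eq_zero]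
  intro h hh
  obtain ⟨x, rfl⟩ := Submodule.Quotient.mk_surjective _ h
  rw [harmonicRep_mk] at hh
  rw [Submodule.Quotient.mk_eq_zero]
  refine ⟨N.homotopy x, ?_⟩
  simpa [hh, LinearMap.mem_ker.1 x.2] using N.harmonicProj_add_map_homotopy_add_homotopy_map x

lemma mk_harmonicRep (h : Hgy d) :
    Submodule.Quotient.mk ⟨N.harmonicRep h, N.map_harmonicRep h⟩ = h :=
  N.harmonicRep_injective (by rw [harmonicRep_mk, harmonicProj_harmonicRep])

lemma inducedFiltration_eq (h𝒜 : IsNovikovFiltration ν 𝒜) (h : Hgy d) :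
    inducedFiltration d 𝒜 h = 𝒜 (N.harmonicRep h) := by
  refine le_antisymm (sInf_le ⟨_, N.mk_harmonicRep h, rfl⟩) (le_sInf ?_)
  rintro _ ⟨x, rfl, rfl⟩
  exact N.apply_harmonicProj_le h𝒜 x

lemma harmonicRep_inducedMap (hchain : d ∘ₗ D = D ∘ₗ d) (h : Hgy d) :
    N.harmonicRep (inducedMap d D hchain h) = N.harmonicProj (D (N.harmonicRep h)) := by
  conv_lhs => rw [← N.mk_harmonicRep h]
  rfl

lemma hodge_injective :
    Function.Injective (N.harmonicRep.coprod N.acyclicPart.subtype) := by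
  rw [injective_iff_map_eq_zero]
  rintro ⟨h, z⟩ hhz
  have hh : h = 0 := N.harmonicRep_injective <| by
    simpa [harmonicProj_harmonicRep, N.harmonicProj_of_mem_acyclicPart z.2] using
      congrArg N.harmonicProj hhz
  simpa [hh] using hhz

lemma hodge_surjective :
    Function.Surjective (N.harmonicRep.coprod N.acyclicPart.subtype) := fun x =>
  ⟨(Submodule.Quotient.mk ⟨N.harmonicProj x, N.map_harmonicProj x⟩,
    ⟨_, N.map_homotopy_add_homotopy_map_mem_acyclicPart x⟩), by
    simp only [LinearMap.coprod_apply, Submodule.subtype_apply]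
    rw [harmonicRep_mk, harmonicProj_harmonicProj, ← add_assoc,
      harmonicProj_add_map_homotopy_add_homotopy_map]⟩

/-- The orthogonal splitting of a complex in normal form into its homology, with zero
differential, and its acyclic part. -/
noncomputable def hodgeEquiv : (Hgy d × N.acyclicPart) ≃ₗ[Λ] V :=
  LinearEquiv.ofBijective _ ⟨N.hodge_injective, N.hodge_surjective⟩

lemma hodgeEquiv_apply (x : Hgy d × N.acyclicPart) :
    N.hodgeEquiv x = N.harmonicRep x.1 + x.2 :=
  rfl

lemma harmonicProj_hodgeEquiv (x : Hgy d × N.acyclicPart) :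
    N.harmonicProj (N.hodgeEquiv x) = N.harmonicRep x.1 := by
  rw [hodgeEquiv_apply, map_add, harmonicProj_harmonicRep,
    N.harmonicProj_of_mem_acyclicPart x.2.2, add_zero]

lemma map_hodgeEquiv (x : Hgy d × N.acyclicPart) :
    d (N.hodgeEquiv x) = N.acyclicDiff x.2 := by
  rw [hodgeEquiv_apply, map_add, map_harmonicRep, zero_add]
  rfl

lemma apply_hodgeEquiv (h𝒜 : IsNovikovFiltration ν 𝒜) (hν : IsNovikovValuation ν)
    (x : Hgy d × N.acyclicPart) :
    𝒜 (N.hodgeEquiv x) = coneFilt (inducedFiltration d 𝒜) (fun z : N.acyclicPart => 𝒜 z) x := by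
  have rep_le : 𝒜 (N.harmonicRep x.1) ≤ 𝒜 (N.hodgeEquiv x) := by
    rw [← harmonicProj_hodgeEquiv]
    exact N.apply_harmonicProj_le h𝒜 _
  have acyclic_le : 𝒜 x.2 ≤ 𝒜 (N.hodgeEquiv x) := by
    have h : (x.2 : V) = N.hodgeEquiv x + -N.harmonicRep x.1 := by
      rw [hodgeEquiv_apply, add_neg_cancel_comm]
    rw [h]
    exact h𝒜.map_add_le_of_le le_rfl ((h𝒜.map_neg hν _).trans_le rep_le)
  rw [coneFilt, N.inducedFiltration_eq h𝒜]
  exact le_antisymm (h𝒜.map_add_le _ _) (max_le rep_le acyclic_le)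

end NormalForm

/-! ### The cone -/

/-- The differential of the cone of a linear map between modules with zero differential. -/
abbrev formalConeDiff (f : V →ₗ[Λ] W) : V × W →ₗ[Λ] V × W :=
  LinearMap.prod 0 (f ∘ₗ LinearMap.fst Λ V W)

lemma formalConeDiff_comp_formalConeDiff (f : V →ₗ[Λ] W) :
    formalConeDiff f ∘ₗ formalConeDiff f = 0 := by
  ext <;> simp

lemma coneDiff_apply (d D : V →ₗ[Λ] V) (t : Λ) (x : V × V) :
    coneDiff d D t x = (-d x.1, t • D x.1 + d x.2) :=
  rfl

lemma coneDiff_comp_coneDiff (hd : d ∘ₗ d = 0) (hchain : d ∘ₗ D = D ∘ₗ d) (t : Λ) :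
    coneDiff d D t ∘ₗ coneDiff d D t = 0 := by
  have hdd (x : V) : d (d x) = 0 := LinearMap.congr_fun hd x
  have hdD (x : V) : d (D x) = D (d x) := LinearMap.congr_fun hchain x
  ext x <;> simp [coneDiff_apply, hdd, hdD]

namespace NormalForm

variable (N : NormalForm ι κ ν 𝒜 d)

/-- The splitting of the cone of `p ∘ D ∘ p`, where `p` is the harmonic projection, into the
cone of `[D]` on homology and two copies of the acyclic part. -/
noncomputable def coneEquiv :
    ((Hgy d × Hgy d) × (N.acyclicPart × N.acyclicPart)) ≃ₗ[Λ] V × V :=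
  (LinearEquiv.prodProdProdComm Λ _ _ _ _).trans (N.hodgeEquiv.prodCongr N.hodgeEquiv)

lemma coneEquiv_apply (x : (Hgy d × Hgy d) × (N.acyclicPart × N.acyclicPart)) :
    N.coneEquiv x = (N.hodgeEquiv (x.1.1, x.2.1), N.hodgeEquiv (x.1.2, x.2.2)) :=
  rfl

lemma apply_coneEquiv (h𝒜 : IsNovikovFiltration ν 𝒜) (hν : IsNovikovValuation ν)
    (x : (Hgy d × Hgy d) × (N.acyclicPart × N.acyclicPart)) :
    coneFilt 𝒜 𝒜 (N.coneEquiv x) =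
      coneFilt (coneFilt (inducedFiltration d 𝒜) (inducedFiltration d 𝒜))
        (coneFilt (fun z : N.acyclicPart => 𝒜 z) fun z : N.acyclicPart => 𝒜 z) x := by
  rw [coneEquiv_apply, coneFilt, N.apply_hodgeEquiv h𝒜 hν, N.apply_hodgeEquiv h𝒜 hν]
  exact max_max_max_comm _ _ _ _

lemma coneDiff_coneEquiv (hchain : d ∘ₗ D = D ∘ₗ d) (t : Λ)
    (x : (Hgy d × Hgy d) × (N.acyclicPart × N.acyclicPart)) :
    coneDiff d (N.harmonicProj ∘ₗ D ∘ₗ N.harmonicProj) t (N.coneEquiv x) =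
      N.coneEquiv (LinearMap.prodMap
        (t • formalConeDiff (inducedMap d D hchain))
        (((-1 : Λ) • N.acyclicDiff).prodMap N.acyclicDiff) x) := by
  simp only [coneDiff_apply, coneEquiv_apply, map_hodgeEquiv, LinearMap.comp_apply,
    harmonicProj_hodgeEquiv]
  simp [hodgeEquiv_apply, harmonicRep_inducedMap]

end NormalForm

/-- The linear automorphism `(x, y) ↦ (x, y + P x)` of `V × V`. -/
def shear (P : V →ₗ[Λ] V) : (V × V) ≃ₗ[Λ] V × V :=
  LinearEquiv.skewProd (.refl Λ V) (.refl Λ V) P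

lemma shear_apply (P : V →ₗ[Λ] V) (x : V × V) : shear P x = (x.1, x.2 + P x.1) :=
  rfl

lemma coneFilt_shear (h𝒜 : IsNovikovFiltration ν 𝒜) (hν : IsNovikovValuation ν) {P : V →ₗ[Λ] V}
    (hP : ∀ x, 𝒜 (P x) ≤ 𝒜 x) (x : V × V) :
    coneFilt 𝒜 𝒜 (shear P x) = coneFilt 𝒜 𝒜 x := by
  rw [shear_apply, coneFilt, coneFilt]
  refine le_antisymm (max_le (le_max_left _ _) ?_) (max_le (le_max_left _ _) ?_)
  · exact h𝒜.map_add_le_of_le (le_max_right _ _) ((hP _).trans (le_max_left _ _))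
  · have h : x.2 = x.2 + P x.1 + -P x.1 := (add_neg_cancel_right _ _).symm
    conv_lhs => rw [h]
    exact h𝒜.map_add_le_of_le (le_max_right _ _)
      ((h𝒜.map_neg hν _).trans_le ((hP _).trans (le_max_left _ _)))

lemma coneDiff_shear {D' h : V →ₗ[Λ] V} (hD : ∀ x, D x = D' x + d (h x) + h (d x)) (t : Λ)
    (x : V × V) :
    coneDiff d D t (shear (-(t • h)) x) = shear (-(t • h)) (coneDiff d D' t x) := by
  simp only [coneDiff_apply, shear_apply, hD, LinearMap.neg_apply, LinearMap.smul_apply, map_add,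
    map_neg, map_smul, smul_add, neg_neg]
  congr 1
  abel

namespace NormalForm

variable (N : NormalForm ι κ ν 𝒜 d)

/-- The chain homotopy between a chain map `D` and `p ∘ D ∘ p`, where `p` is the harmonic
projection. -/
noncomputable def chainHomotopy (D : V →ₗ[Λ] V) : V →ₗ[Λ] V :=
  N.homotopy ∘ₗ D ∘ₗ N.harmonicProj + D ∘ₗ N.homotopy

lemma eq_harmonicProj_add_chainHomotopy (hchain : d ∘ₗ D = D ∘ₗ d) (x : V) :
    D x = (N.harmonicProj ∘ₗ D ∘ₗ N.harmonicProj) x + d (N.chainHomotopy D x) +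
      N.chainHomotopy D (d x) := by
  have hdD (x : V) : d (D x) = D (d x) := LinearMap.congr_fun hchain x
  have h := N.harmonicProj_add_map_homotopy_add_homotopy_map (D (N.harmonicProj x))
  conv_lhs => rw [← N.harmonicProj_add_map_homotopy_add_homotopy_map x, map_add, map_add, ← h]
  simp only [chainHomotopy, LinearMap.add_apply, LinearMap.comp_apply, hdD, map_harmonicProj,
    harmonicProj_map, map_add, map_zero, add_zero, zero_add]
  abel

lemma apply_neg_smul_chainHomotopy_le (h𝒜 : IsNovikovFiltration ν 𝒜)
    (hν : IsNovikovValuation ν) (hD : ∀ x, 𝒜 (D x) ≤ 𝒜 x) {t : Λ} {σ : ℝ} (ht : ν t = σ)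
    (hσ : ∀ j, N.barLength j ≤ σ) (x : V) : 𝒜 ((-(t • N.chainHomotopy D)) x) ≤ 𝒜 x := by
  have homotopy_le : 𝒜 (N.chainHomotopy D x) ≤ 𝒜 x + σ := by
    refine h𝒜.map_add_le_of_le ?_ ((hD _).trans (N.apply_homotopy_le h𝒜 hσ x))
    refine (N.apply_homotopy_le h𝒜 hσ _).trans (add_le_add_left ?_ _)
    exact (hD _).trans (N.apply_harmonicProj_le h𝒜 x)
  rw [LinearMap.neg_apply, h𝒜.map_neg hν, LinearMap.smul_apply, h𝒜.map_smul, ht]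
  exact EReal.sub_le_of_le_add homotopy_le

/-- The normal form of the cone of `t • D` obtained from normal forms of `d` and of the cone of
`[D]` on homology, when `ν t = σ` is at least every bar-length of `d`. -/
noncomputable def cone (h𝒜 : IsNovikovFiltration ν 𝒜) (hν : IsNovikovValuation ν)
    (hD : ∀ x, 𝒜 (D x) ≤ 𝒜 x) (hchain : d ∘ₗ D = D ∘ₗ d) {t : Λ} {σ : ℝ} (ht : ν t = σ)
    (hσ : ∀ j, N.barLength j ≤ σ)
    (H : NormalForm ι' κ' ν (coneFilt (inducedFiltration d 𝒜) (inducedFiltration d 𝒜))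
      (formalConeDiff (inducedMap d D hchain))) :
    NormalForm (ι' ⊕ Empty ⊕ Empty) (κ' ⊕ κ ⊕ κ) ν (coneFilt 𝒜 𝒜) (coneDiff d D t) :=
  (((H.smul hν ht).prod (((N.acyclic hν).smul hν hν.map_neg_one).prod (N.acyclic hν) hν) hν).map
    N.coneEquiv (N.apply_coneEquiv h𝒜 hν) (N.coneDiff_coneEquiv hchain t)).map
    (shear (-(t • N.chainHomotopy D)))
    (coneFilt_shear h𝒜 hν (N.apply_neg_smul_chainHomotopy_le h𝒜 hν hD ht hσ))
    (coneDiff_shear (N.eq_harmonicProj_add_chainHomotopy hchain) t)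

lemma barSpectrum_cone (h𝒜 : IsNovikovFiltration ν 𝒜) (hν : IsNovikovValuation ν)
    (hD : ∀ x, 𝒜 (D x) ≤ 𝒜 x) (hchain : d ∘ₗ D = D ∘ₗ d) {t : Λ} {σ : ℝ} (ht : ν t = σ)
    (hσ : ∀ j, N.barLength j ≤ σ)
    (H : NormalForm ι' κ' ν (coneFilt (inducedFiltration d 𝒜) (inducedFiltration d 𝒜))
      (formalConeDiff (inducedMap d D hchain))) :
    (N.cone h𝒜 hν hD hchain ht hσ H).barSpectrum =
      N.barSpectrum + N.barSpectrum + H.barSpectrum.map (σ + ·) := by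
  simp [cone, add_comm]

end NormalForm

theorem cone_barLength_spectrum_splits_general (hν : IsNovikovValuation ν)
    (h𝒜 : IsNovikovFiltration ν 𝒜) (hd : d ∘ₗ d = 0) (hD : ∀ x, 𝒜 (D x) ≤ 𝒜 x)
    (hchain : d ∘ₗ D = D ∘ₗ d) {t : Λ} {σ : ℝ} (ht : ν t = σ) {Sc Sd Sh : Multiset ℝ}
    (hσ : ∀ b ∈ Sd, b ≤ σ) (hSc : IsBarSpectrum ν (coneFilt 𝒜 𝒜) (coneDiff d D t) Sc)
    (hSd : IsBarSpectrum ν 𝒜 d Sd)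
    (hSh : IsBarSpectrum ν (coneFilt (inducedFiltration d 𝒜) (inducedFiltration d 𝒜))
      (formalConeDiff (inducedMap d D hchain)) Sh) :
    Sc = Sd + Sd + Sh.map (fun b => σ + b) := by
  obtain ⟨_, _, N, rfl⟩ := hSd.exists_normalForm hd
  obtain ⟨_, _, H, rfl⟩ := hSh.exists_normalForm (formalConeDiff_comp_formalConeDiff _)
  obtain ⟨_, _, M, rfl⟩ := hSc.exists_normalForm (coneDiff_comp_coneDiff hd hchain t)
  have barLength_le (j) : N.barLength j ≤ σ :=
    hσ _ (Multiset.mem_map_of_mem _ (Finset.mem_univ j))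
  rw [M.barSpectrum_unique (N.cone h𝒜 hν hD hchain ht barLength_le H) hν, N.barSpectrum_cone]

end

/-- For `σ` sufficiently large, the bar-length spectrum of the shifted cone
`C̄_σ = Cone(T^σ · D)` is the doubled spectrum of `(C, d)` together with `σ` plus the
spectrum of the cone of the induced map `[D]` on homology with its induced filtration. -/
theorem cone_barLength_spectrum_splits
    {Λ C : Type*} [Field Λ] [AddCommGroup C] [Module Λ C] [FiniteDimensional Λ C]
    (ν : Λ → EReal)
    (hν_ne_bot : ∀ x : Λ, ν x ≠ ⊥)
    (hν_zero : ∀ x : Λ, ν x = ⊤ ↔ x = 0)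
    (hν_mul : ∀ x y : Λ, ν (x * y) = ν x + ν y)
    (hν_add : ∀ x y : Λ, min (ν x) (ν y) ≤ ν (x + y))
    (𝒜 : C → EReal)
    (h𝒜_ne_top : ∀ x : C, 𝒜 x ≠ ⊤)
    (h𝒜_zero : ∀ x : C, 𝒜 x = ⊥ ↔ x = 0)
    (h𝒜_smul : ∀ (l : Λ) (x : C), 𝒜 (l • x) = 𝒜 x - ν l)
    (h𝒜_max : ∀ x y : C, 𝒜 (x + y) ≤ max (𝒜 x) (𝒜 y))
    (d D : C →ₗ[Λ] C)
    (hd2 : d ∘ₗ d = 0)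
    (hd_filt : ∀ x : C, 𝒜 (d x) ≤ 𝒜 x)
    (hD_filt : ∀ x : C, 𝒜 (D x) ≤ 𝒜 x)
    (hchain : d ∘ₗ D = D ∘ₗ d)
    (Tp : ℝ → Λ) (hTp : ∀ r : ℝ, ν (Tp r) = (r : EReal)) :
    ∃ σ₀ : ℝ, ∀ σ : ℝ, σ₀ ≤ σ →
      ∀ Sc Sd Sh : Multiset ℝ,
        IsBarSpectrum ν (coneFilt 𝒜 𝒜) (coneDiff d D (Tp σ)) Sc →
        IsBarSpectrum ν 𝒜 d Sd →
        IsBarSpectrum ν (coneFilt (inducedFiltration d 𝒜) (inducedFiltration d 𝒜))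
          (LinearMap.prod 0
            ((inducedMap d D hchain) ∘ₗ LinearMap.fst Λ (Hgy d) (Hgy d))) Sh →
        Sc = Sd + Sd + Sh.map (fun b => σ + b) := by
  have hν : IsNovikovValuation ν := ⟨hν_ne_bot, hν_zero, hν_mul, hν_add⟩
  have h𝒜 : IsNovikovFiltration ν 𝒜 := ⟨h𝒜_ne_top, h𝒜_zero, h𝒜_smul, h𝒜_max⟩
  obtain ⟨σ₀, hσ₀⟩ := exists_barLength_le hν 𝒜 hd2
  exact ⟨σ₀, fun σ hσ Sc Sd Sh hSc hSd hSh =>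
    cone_barLength_spectrum_splits_general hν h𝒜 hd2 hD_filt hchain (hTp σ)
      (fun b hb => (hσ₀ Sd hSd b hb).trans hσ) hSc hSd hSh⟩
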